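/- arXiv:2604.17424 — 6 statements merged into one kernel-verified Lean document; each statement's English description precedes it below -/
import Mathlib

section
/- For every integer m ≥ 3, the multisets {3m, 2m−1, 2} and {4m−2, m, 3} are distinct partitions of 5m+1, each with exactly three parts, the parts of each multiset have greatest common divisor 1, and pre_3 of each equals the single-element multiset {6m(2m−1)}. -/
/-- `preK k P` is the multiset of products of all `k`-element sub-multisets of the
multiset of parts `P`; it is empty when `P` has fewer than `k` elements. -/
def preK (k : ℕ) (P : Multiset ℕ) : Multiset ℕ :=
  (P.powersetCard k).map Multiset.prod

theorem preK_of_card_eq {k : ℕ} {P : Multiset ℕ} (hP : P.card = k) : preK k P = {P.prod} := by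
  rw [← hP, preK, Multiset.powersetCard_self, Multiset.map_singleton]

theorem preK_three_triple (a b c : ℕ) : preK 3 {a, b, c} = {a * b * c} := by
  rw [preK_of_card_eq (Multiset.card_eq_three.mpr ⟨a, b, c, rfl⟩)]
  simp [mul_assoc]

theorem gcd_gcd_eq_one_of_dvd_add {a b c n : ℕ} (hb : b ∣ a + c) (hcn : c.Coprime n) :
    Nat.gcd a (Nat.gcd b n) = 1 := by
  have dvd_b : a.gcd (b.gcd n) ∣ b := (Nat.gcd_dvd_right _ _).trans (Nat.gcd_dvd_left _ _)
  have dvd_n : a.gcd (b.gcd n) ∣ n := (Nat.gcd_dvd_right _ _).trans (Nat.gcd_dvd_right _ _)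
  have dvd_c : a.gcd (b.gcd n) ∣ c :=
    (Nat.dvd_add_right (Nat.gcd_dvd_left _ _)).mp (dvd_b.trans hb)
  exact Nat.eq_one_of_dvd_coprimes hcn dvd_c dvd_n

theorem stmt_2 (m : ℕ) (hm : 3 ≤ m) :
    let α : Multiset ℕ := {3 * m, 2 * m - 1, 2}
    let β : Multiset ℕ := {4 * m - 2, m, 3}
    α ≠ β ∧
    (∀ x ∈ α, 0 < x) ∧ α.sum = 5 * m + 1 ∧ α.card = 3 ∧
    (∀ x ∈ β, 0 < x) ∧ β.sum = 5 * m + 1 ∧ β.card = 3 ∧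
    Nat.gcd (3 * m) (Nat.gcd (2 * m - 1) 2) = 1 ∧
    Nat.gcd (4 * m - 2) (Nat.gcd m 3) = 1 ∧
    preK 3 α = {6 * m * (2 * m - 1)} ∧ preK 3 β = {6 * m * (2 * m - 1)} := by
  intro α β
  have mem_α (x : ℕ) : x ∈ α ↔ x = 3 * m ∨ x = 2 * m - 1 ∨ x = 2 := by simp [α]
  have mem_β (x : ℕ) : x ∈ β ↔ x = 4 * m - 2 ∨ x = m ∨ x = 3 := by simp [β]
  have two_mem_α : 2 ∈ α := by simp [α]
  have two_notMem_β : 2 ∉ β := by rw [mem_β]; omega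
  have sum_α : α.sum = 3 * m + (2 * m - 1 + 2) := by simp [α]
  have sum_β : β.sum = 4 * m - 2 + (m + 3) := by simp [β]
  have odd_middle : Odd (2 * m - 1) := ⟨m - 1, by omega⟩
  have factor_two : 4 * m - 2 = 2 * (2 * m - 1) := by omega
  refine ⟨ne_of_mem_of_not_mem' two_mem_α two_notMem_β,
    fun x hx ↦ by rw [mem_α] at hx; omega, by omega, rfl,
    fun x hx ↦ by rw [mem_β] at hx; omega, by omega, rfl, ?gcd_α, ?gcd_β, ?preK_α, ?preK_β⟩
  case gcd_α => rw [odd_middle.coprime_two_right, Nat.gcd_one_right]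
  case gcd_β => exact gcd_gcd_eq_one_of_dvd_add (c := 2) ⟨4, by omega⟩ (by norm_num)
  case preK_α => rw [preK_three_triple]; congr 1; ring
  case preK_β => rw [preK_three_triple, factor_two]; congr 1; ring
end

section
/- Let k ≥ 1 and ℓ ≥ k be integers, and let λ and μ be partitions each with exactly ℓ parts. If pre_k(λ) = pre_k(μ), then the product of the parts of λ equals the product of the parts of μ. -/
/-!
Each member of a multiset `s` with `n` elements lies in `(n - 1).choose (k - 1)` of its `k`-element
sub-multisets. The product of all entries of `pre_k(s)` is therefore the product of `s` raised to
the power `(n - 1).choose (k - 1)`. This exponent is positive when `1 ≤ k ≤ n`, so taking roots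
recovers the product of `s`.
-/

open Multiset

section Join

variable {α : Type*}

theorem join_map_cons (a : α) (S : Multiset (Multiset α)) :
    (S.map (cons a)).join = S.card • {a} + S.join := by
  induction S using Multiset.induction_on with
  | empty => simp
  | cons t S ih =>
    rw [map_cons, join_cons, join_cons, card_cons, ih, add_nsmul, one_nsmul, ← singleton_add]
    abel

theorem join_powersetCard_succ_cons (k : ℕ) (a : α) (s : Multiset α) :
    ((a ::ₘ s).powersetCard (k + 1)).join =
      (s.powersetCard (k + 1)).join + (s.card.choose k • {a} + (s.powersetCard k).join) := by
  rw [powersetCard_cons, join_add, join_map_cons, card_powersetCard]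

theorem join_powersetCard_succ (k : ℕ) (s : Multiset α) :
    (s.powersetCard (k + 1)).join = (s.card - 1).choose k • s := by
  induction s using Multiset.induction_on generalizing k with
  | empty => simp [powersetCard_zero_right]
  | cons a s ih =>
    rw [join_powersetCard_succ_cons, ih, card_cons, Nat.add_sub_cancel, ← singleton_add]
    cases k with
    | zero => simp [add_comm]
    | succ k =>
      obtain rfl | hs := eq_or_ne s 0
      · simp [powersetCard_zero_right]
      have pascal : s.card.choose (k + 1) =
          (s.card - 1).choose k + (s.card - 1).choose (k + 1) :=
        Nat.choose_eq_choose_pred_add (card_pos.2 hs) k.succ_pos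
      rw [ih, nsmul_add, congrArg (· • s) pascal, add_nsmul]
      abel

end Join

section Prod

variable {M : Type*} [CommMonoid M]

theorem prod_map_prod_powersetCard_succ (k : ℕ) (s : Multiset M) :
    ((s.powersetCard (k + 1)).map prod).prod = s.prod ^ (s.card - 1).choose k := by
  rw [← prod_join, join_powersetCard_succ, prod_nsmul]

theorem stmt_9_general [IsMulTorsionFree M] {k : ℕ} {s t : Multiset M} (hk : k ≠ 0)
    (hks : k ≤ s.card) (hcard : s.card = t.card)
    (h : (s.powersetCard k).map prod = (t.powersetCard k).map prod) : s.prod = t.prod := by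
  obtain ⟨j, rfl⟩ := Nat.exists_eq_succ_of_ne_zero hk
  have choose_ne_zero : (s.card - 1).choose j ≠ 0 := Nat.choose_ne_zero (Nat.le_sub_one_of_lt hks)
  apply pow_left_injective choose_ne_zero
  calc s.prod ^ (s.card - 1).choose j
      = ((s.powersetCard (j + 1)).map prod).prod := (prod_map_prod_powersetCard_succ j s).symm
    _ = ((t.powersetCard (j + 1)).map prod).prod := congrArg prod h
    _ = t.prod ^ (s.card - 1).choose j := by rw [prod_map_prod_powersetCard_succ, hcard]

end Prod

theorem stmt_9 (k l : ℕ) (hk : 1 ≤ k) (hkl : k ≤ l) (lam mu : Multiset ℕ)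
    (hlam : ∀ x ∈ lam, 0 < x) (hmu : ∀ x ∈ mu, 0 < x)
    (hlcard : lam.card = l) (hmcard : mu.card = l)
    (h : preK k lam = preK k mu) : lam.prod = mu.prod :=
  stmt_9_general (Nat.one_le_iff_ne_zero.mp hk) (hlcard ▸ hkl) (hlcard.trans hmcard.symm) h
end

section
/- For every integer k ≥ 2 and every positive integer n, the map pre_k is injective on the set of partitions of n with exactly k+1 parts. -/
/-!
The `k`-element sub-multisets of a multiset `s` with `k + 1` elements are the `s.erase x`, `x ∈ s`.
Each element of `s` survives in `k` of them, so their products multiply to `s.prod ^ k`, which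
determines `s.prod`. Since `x * (s.erase x).prod = s.prod`, each of these products then determines
the element `x` that was left out.
-/

section Erase

variable {α : Type*} [DecidableEq α]

theorem powersetCard_eq_map_erase_of_card_eq_succ {s : Multiset α} {k : ℕ} (hs : s.card = k + 1) :
    s.powersetCard k = s.map s.erase := by
  induction s using Multiset.induction_on generalizing k with
  | empty => simp at hs
  | cons a s ih =>
    obtain rfl : s.card = k := by simpa using hs
    have map_erase_cons : s.map (a ::ₘ s).erase = (s.map s.erase).map (a ::ₘ ·) := by
      rw [Multiset.map_map]
      exact Multiset.map_congr rfl fun x hx ↦ Multiset.erase_cons_tail_of_mem hx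
    rw [Multiset.map_cons, Multiset.erase_cons_head, map_erase_cons]
    cases hm : s.card with
    | zero => simp [Multiset.card_eq_zero.mp hm]
    | succ m =>
      rw [Multiset.powersetCard_cons, ← ih hm, ← hm, Multiset.powersetCard_self,
        Multiset.singleton_add]

theorem sum_map_erase_add_self (s : Multiset α) : (s.map s.erase).sum + s = s.card • s :=
  calc (s.map s.erase).sum + s
      = (s.map fun x ↦ s.erase x + {x}).sum := by
        rw [Multiset.sum_map_add, Multiset.sum_map_singleton]
    _ = (s.map fun _ ↦ s).sum := by
        congr 1
        refine Multiset.map_congr rfl fun x hx ↦ ?_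
        rw [add_comm, Multiset.singleton_add, Multiset.cons_erase hx]
    _ = s.card • s := by rw [Multiset.map_const', Multiset.sum_replicate]

end Erase

section CommMonoid

variable {M : Type*} [CommMonoid M] {s t : Multiset M} {k : ℕ}

theorem prod_map_prod_powersetCard_of_card_eq_succ (hs : s.card = k + 1) :
    ((s.powersetCard k).map Multiset.prod).prod = s.prod ^ k := by
  classical
  have sum_erase : (s.map s.erase).sum = k • s :=
    add_right_cancel <| (sum_map_erase_add_self s).trans <| by rw [hs, succ_nsmul]
  rw [powersetCard_eq_map_erase_of_card_eq_succ hs, ← Multiset.prod_nsmul, ← sum_erase]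
  exact Multiset.prod_join.symm

theorem isRegular_multiset_prod (hs : ∀ x ∈ s, IsRegular x) : IsRegular s.prod :=
  Multiset.prod_induction IsRegular s (fun _ _ ↦ IsRegular.mul) isRegular_one hs

theorem eq_of_map_prod_erase_eq [DecidableEq M] (hs : ∀ x ∈ s, IsRegular x)
    (hprod : s.prod = t.prod)
    (h : s.map (fun x ↦ (s.erase x).prod) = t.map fun y ↦ (t.erase y).prod) : s = t := by
  rw [← Multiset.rel_eq, Multiset.rel_map] at h
  refine Multiset.rel_eq.mp <| h.mono fun x hx y hy hxy ↦ ?_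
  have erase_regular : IsRegular (s.erase x).prod :=
    isRegular_multiset_prod fun z hz ↦ hs z (Multiset.mem_of_mem_erase hz)
  apply erase_regular.right
  calc x * (s.erase x).prod
      = s.prod := Multiset.prod_erase hx
    _ = t.prod := hprod
    _ = y * (t.erase y).prod := (Multiset.prod_erase hy).symm
    _ = y * (s.erase x).prod := by rw [hxy]

theorem stmt_10_general [IsMulTorsionFree M] (hk : k ≠ 0) (hs : ∀ x ∈ s, IsRegular x)
    (hs_card : s.card = k + 1) (ht_card : t.card = k + 1)
    (h : (s.powersetCard k).map Multiset.prod = (t.powersetCard k).map Multiset.prod) :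
    s = t := by
  classical
  have prod_pow_eq : s.prod ^ k = t.prod ^ k := by
    rw [← prod_map_prod_powersetCard_of_card_eq_succ hs_card, h,
      prod_map_prod_powersetCard_of_card_eq_succ ht_card]
  have prod_eq : s.prod = t.prod := pow_left_injective hk prod_pow_eq
  refine eq_of_map_prod_erase_eq hs prod_eq ?_
  simpa only [powersetCard_eq_map_erase_of_card_eq_succ, hs_card, ht_card,
    Multiset.map_map, Function.comp_def] using h

end CommMonoid

theorem stmt_10 (k n : ℕ) (hk : 2 ≤ k) (hn : 1 ≤ n) :
    ∀ lam mu : Multiset ℕ,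
      (∀ x ∈ lam, 0 < x) → lam.sum = n → lam.card = k + 1 →
      (∀ x ∈ mu, 0 < x) → mu.sum = n → mu.card = k + 1 →
      preK k lam = preK k mu → lam = mu :=
  fun _ _ hlam _ hlam_card _ _ hmu_card h ↦
    stmt_10_general (by lia) (fun x hx ↦ .of_ne_zero (hlam x hx).ne') hlam_card hmu_card h
end

section
/- For every positive integer n, the map pre_2 is injective on the set of partitions of n with exactly five parts. -/
/-!
Write the five elements as `a ≤ b ≤ c ≤ d ≤ e`. The two smallest pairwise products are `a * b` and
`a * c`, and the two largest are `d * e` and `c * e`. The product of all pairwise products is the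
fourth power of `a * b * c * d * e`, so this total is determined too; dividing it by
`(a * b) * (d * e)` gives the median `c`, and then the other four elements follow.
Only the order and cancellation matter: this works in every linearly ordered cancellative
commutative monoid, and the positive integers form one under multiplication.
-/

section Order

variable {α : Type*}

theorem cons_eq_cons_iff_of_forall_le [PartialOrder α] {x y : α} {s t : Multiset α}
    (hx : ∀ z ∈ s, x ≤ z) (hy : ∀ z ∈ t, y ≤ z) : x ::ₘ s = y ::ₘ t ↔ x = y ∧ s = t := by
  refine ⟨fun h ↦ ?_, fun ⟨hxy, hst⟩ ↦ by rw [hxy, hst]⟩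
  have hyx : y ≤ x := by
    have hmem : x ∈ y ::ₘ t := h ▸ Multiset.mem_cons_self x s
    exact (Multiset.mem_cons.1 hmem).elim ge_of_eq (hy x)
  have hxy : x ≤ y := by
    have hmem : y ∈ x ::ₘ s := h ▸ Multiset.mem_cons_self y t
    exact (Multiset.mem_cons.1 hmem).elim ge_of_eq (hx y)
  obtain rfl := le_antisymm hxy hyx
  exact ⟨rfl, (Multiset.cons_inj_right x).1 h⟩

theorem exists_sorted_of_card_eq_five [LinearOrder α] {s : Multiset α} (hs : s.card = 5) :
    ∃ a b c d e, a ≤ b ∧ b ≤ c ∧ c ≤ d ∧ d ≤ e ∧ s = {a, b, c, d, e} := by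
  have hlength : (s.sort (· ≤ ·)).length = 5 := by rw [Multiset.length_sort, hs]
  obtain ⟨a, b, c, d, e, hl⟩ : ∃ a b c d e, s.sort (· ≤ ·) = [a, b, c, d, e] := by
    match s.sort (· ≤ ·), hlength with
    | [a, b, c, d, e], _ => exact ⟨a, b, c, d, e, rfl⟩
  have hsorted := s.pairwise_sort (· ≤ ·)
  have hsort := s.sort_eq (· ≤ ·)
  rw [hl] at hsorted hsort
  simp only [List.pairwise_cons, List.mem_cons, forall_eq_or_imp] at hsorted
  obtain ⟨⟨hab, -⟩, ⟨hbc, -⟩, ⟨hcd, -⟩, ⟨hde, -⟩, -⟩ := hsorted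
  exact ⟨a, b, c, d, e, hab, hbc, hcd, hde, hsort.symm⟩

end Order

section CommMonoid

variable {M : Type*} [CommMonoid M]

/-- The multiset of products of all two-element sub-multisets of `s`: the analogue of `preK 2` in an
arbitrary commutative monoid. -/
def pairProducts (s : Multiset M) : Multiset M :=
  (s.powersetCard 2).map Multiset.prod

theorem pairProducts_cons (a : M) (s : Multiset M) :
    pairProducts (a ::ₘ s) = pairProducts s + s.map (a * ·) := by
  simp [pairProducts, Multiset.powersetCard_cons 1, Multiset.powersetCard_one]

theorem pairProducts_cons_cons_cons (a b c : M) (s : Multiset M) :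
    pairProducts (a ::ₘ b ::ₘ c ::ₘ s) =
      a * b ::ₘ a * c ::ₘ (pairProducts (c ::ₘ s) + (c ::ₘ s).map (b * ·) + s.map (a * ·)) := by
  rw [pairProducts_cons, pairProducts_cons b]
  simp only [Multiset.map_cons, Multiset.add_cons]

theorem prod_pairProducts (s : Multiset M) :
    (pairProducts s).prod = s.prod ^ (s.card - 1) := by
  induction s using Multiset.induction_on with
  | empty => simp [pairProducts, Multiset.powersetCard_zero_right 1]
  | cons a s ih =>
    rcases eq_or_ne s 0 with rfl | hs
    · simp [pairProducts]
    · calc (pairProducts (a ::ₘ s)).prod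
          = s.prod ^ (s.card - 1) * (a ^ s.card * s.prod) := by
            rw [pairProducts_cons, Multiset.prod_add, ih, Multiset.prod_map_mul]
            simp
        _ = (a * s.prod) ^ s.card := by
            rw [mul_left_comm, pow_sub_one_mul (Multiset.card_eq_zero.not.2 hs), mul_pow]
        _ = (a ::ₘ s).prod ^ ((a ::ₘ s).card - 1) := by simp

theorem prod_eq_of_pairProducts_eq [IsMulTorsionFree M] {s t : Multiset M} (hs : 1 < s.card)
    (hst : s.card = t.card) (h : pairProducts s = pairProducts t) : s.prod = t.prod := by
  have hpow : s.prod ^ (s.card - 1) = t.prod ^ (s.card - 1) := by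
    rw [← prod_pairProducts, h, prod_pairProducts, hst]
  exact pow_left_injective (Nat.sub_ne_zero_of_lt hs) hpow

theorem mul_le_of_mem_pairProducts [Preorder M] [IsOrderedMonoid M] {a z : M} {s : Multiset M}
    (hs : ∀ x ∈ s, a ≤ x) (hz : z ∈ pairProducts s) : a * a ≤ z := by
  obtain ⟨p, hp, rfl⟩ := Multiset.mem_map.1 hz
  obtain ⟨hps, hcard⟩ := Multiset.mem_powersetCard.1 hp
  obtain ⟨x, y, rfl⟩ := Multiset.card_eq_two.1 hcard
  rw [Multiset.prod_pair]
  exact mul_le_mul' (hs x (Multiset.mem_of_le hps (by simp)))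
    (hs y (Multiset.mem_of_le hps (by simp)))

theorem mul_le_of_mem_pairProducts_add_map_add_map [Preorder M] [IsOrderedMonoid M]
    {a b c z : M} {s : Multiset M} (hab : a ≤ b) (hbc : b ≤ c) (hs : ∀ x ∈ s, c ≤ x)
    (hz : z ∈ pairProducts (c ::ₘ s) + (c ::ₘ s).map (b * ·) + s.map (a * ·)) : a * c ≤ z := by
  have hcs : ∀ x ∈ c ::ₘ s, c ≤ x := Multiset.forall_mem_cons.2 ⟨le_rfl, hs⟩
  simp only [Multiset.mem_add, Multiset.mem_map] at hz
  obtain (hz | ⟨x, hx, rfl⟩) | ⟨x, hx, rfl⟩ := hz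
  · exact (mul_le_mul_left (hab.trans hbc) c).trans (mul_le_of_mem_pairProducts hcs hz)
  · exact mul_le_mul' hab (hcs x hx)
  · exact mul_le_mul_right (hs x hx) a

theorem mul_eq_mul_of_pairProducts_eq [PartialOrder M] [IsOrderedMonoid M]
    {a b c a' b' c' : M} {s t : Multiset M}
    (hab : a ≤ b) (hbc : b ≤ c) (hs : ∀ x ∈ s, c ≤ x)
    (hab' : a' ≤ b') (hbc' : b' ≤ c') (ht : ∀ x ∈ t, c' ≤ x)
    (h : pairProducts (a ::ₘ b ::ₘ c ::ₘ s) = pairProducts (a' ::ₘ b' ::ₘ c' ::ₘ t)) :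
    a * b = a' * b' ∧ a * c = a' * c' := by
  have hrest := fun z ↦ mul_le_of_mem_pairProducts_add_map_add_map (z := z) hab hbc hs
  have hrest' := fun z ↦ mul_le_of_mem_pairProducts_add_map_add_map (z := z) hab' hbc' ht
  have habc : a * b ≤ a * c := mul_le_mul_right hbc a
  have habc' : a' * b' ≤ a' * c' := mul_le_mul_right hbc' a'
  rw [pairProducts_cons_cons_cons, pairProducts_cons_cons_cons,
    cons_eq_cons_iff_of_forall_le
      (Multiset.forall_mem_cons.2 ⟨habc, fun z hz ↦ habc.trans (hrest z hz)⟩)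
      (Multiset.forall_mem_cons.2 ⟨habc', fun z hz ↦ habc'.trans (hrest' z hz)⟩),
    cons_eq_cons_iff_of_forall_le hrest hrest'] at h
  exact ⟨h.1, h.2.1⟩

theorem stmt_14_general [LinearOrder M] [IsOrderedCancelMonoid M] {s t : Multiset M}
    (hs : s.card = 5) (ht : t.card = 5) (h : pairProducts s = pairProducts t) : s = t := by
  have hprod : s.prod = t.prod := prod_eq_of_pairProducts_eq (by omega) (hs.trans ht.symm) h
  obtain ⟨a, b, c, d, e, hab, hbc, hcd, hde, rfl⟩ := exists_sorted_of_card_eq_five hs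
  obtain ⟨a', b', c', d', e', hab', hbc', hcd', hde', rfl⟩ := exists_sorted_of_card_eq_five ht
  obtain ⟨h_ab, h_ac⟩ : a * b = a' * b' ∧ a * c = a' * c' :=
    mul_eq_mul_of_pairProducts_eq hab hbc (by simp [hcd, hcd.trans hde])
      hab' hbc' (by simp [hcd', hcd'.trans hde']) h
  obtain ⟨h_ed, h_ec⟩ : e * d = e' * d' ∧ e * c = e' * c' := by
    have reverse (a b c d e : M) : ({a, b, c, d, e} : Multiset M) = {e, d, c, b, a} :=
      (Multiset.coe_reverse [a, b, c, d, e]).symm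
    -- In the order dual, `e * d` and `e * c` are the two smallest products.
    rw [reverse a, reverse a'] at h
    have hle : ∀ x ∈ ({b, a} : Multiset M), x ≤ c := by simp [hbc, hab.trans hbc]
    have hle' : ∀ x ∈ ({b', a'} : Multiset M), x ≤ c' := by simp [hbc', hab'.trans hbc']
    exact mul_eq_mul_of_pairProducts_eq (M := Mᵒᵈ) hde hcd hle hde' hcd' hle' h
  have prod_eq (a b c d e : M) : ({a, b, c, d, e} : Multiset M).prod = a * b * (e * d) * c := by
    simp only [Multiset.insert_eq_cons, Multiset.prod_cons, Multiset.prod_singleton]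
    ac_rfl
  rw [prod_eq, prod_eq, h_ab, h_ed] at hprod
  obtain rfl : c = c' := mul_left_cancel hprod
  obtain rfl : a = a' := mul_right_cancel h_ac
  obtain rfl : e = e' := mul_right_cancel h_ec
  obtain rfl : b = b' := mul_left_cancel h_ab
  obtain rfl : d = d' := mul_left_cancel h_ed
  rfl

end CommMonoid

theorem preK_two_map_coe (s : Multiset ℕ+) :
    preK 2 (s.map (↑)) = (pairProducts s).map (↑) := by
  simp only [preK, pairProducts, Multiset.powersetCard_map, Multiset.map_map, Function.comp_apply]
  exact Multiset.map_congr rfl fun p _ ↦ (map_multiset_prod PNat.coeMonoidHom p).symm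

theorem stmt_14 (n : ℕ) (hn : 1 ≤ n) :
    ∀ lam mu : Multiset ℕ,
      (∀ x ∈ lam, 0 < x) → lam.sum = n → lam.card = 5 →
      (∀ x ∈ mu, 0 < x) → mu.sum = n → mu.card = 5 →
      preK 2 lam = preK 2 mu → lam = mu := by
  intro lam mu hlam _ hlam_card hmu _ hmu_card h
  lift lam to Multiset ℕ+ using hlam
  lift mu to Multiset ℕ+ using hmu
  rw [Multiset.card_map] at hlam_card hmu_card
  rw [preK_two_map_coe, preK_two_map_coe] at h
  rw [stmt_14_general hlam_card hmu_card (Multiset.map_injective PNat.coe_injective h)]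
end

section
/- For every positive integer n, the map pre_2 is injective on the set of partitions of n with exactly six parts. -/
/-!
Taking logarithms turns products into sums, so the claim becomes the Selfridge–Straus theorem:
in a domain of characteristic zero, `m` numbers are determined by their pairwise sums unless `m`
is a power of two. Write `p k` for the `k`-th power sum of the numbers. Expanding
`∑ (x + y) ^ k` over all ordered pairs `(x, y)` with the binomial theorem, and separating the
diagonal, expresses twice the `k`-th power sum of the pairwise sums as `(2 * m - 2 ^ k) * p k` plus
terms in `p 1, …, p (k - 1)`. Hence the pairwise sums determine all `p k` by recursion, and the
power sums determine the numbers because the sequences `k ↦ x ^ k` are linearly independent.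
-/

section KSums

variable {M : Type*} [AddCommMonoid M]

/-- The additive analogue of `preK`: the multiset of sums of all `k`-element sub-multisets
of `s`. -/
def kSums (k : ℕ) (s : Multiset M) : Multiset M :=
  (s.powersetCard k).map Multiset.sum

lemma kSums_two_zero : kSums 2 (0 : Multiset M) = 0 := by
  simp [kSums, Multiset.powersetCard_zero_right]

lemma kSums_two_cons (a : M) (s : Multiset M) :
    kSums 2 (a ::ₘ s) = kSums 2 s + s.map (a + ·) := by
  simp [kSums, Multiset.powersetCard_cons, Multiset.powersetCard_one]

lemma map_add_product_self (s : Multiset M) :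
    (s ×ˢ s).map (fun z ↦ z.1 + z.2) = 2 • kSums 2 s + s.map (2 • ·) := by
  induction s using Multiset.induction_on with
  | empty => simp [kSums_two_zero]
  | cons a s ih =>
    simp only [Multiset.cons_product, Multiset.product_cons, Multiset.map_add, Multiset.map_map,
      Multiset.map_cons, ih, kSums_two_cons, Function.comp_def, add_comm _ a]
    simp only [two_nsmul, ← Multiset.singleton_add]
    abel

end KSums

section PowerSum

lemma sum_map_mul_product {α β R : Type*} [NonUnitalNonAssocSemiring R]
    (s : Multiset α) (t : Multiset β) (f : α → R) (g : β → R) :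
    ((s ×ˢ t).map fun z ↦ f z.1 * g z.2).sum = (s.map f).sum * (t.map g).sum := by
  induction s using Multiset.induction_on with
  | empty => simp
  | cons a s ih => simp [ih, add_mul, Multiset.sum_map_mul_left]

variable {R : Type*}

/-- The power sum `∑ x ^ k` over the elements `x` of the multiset `s`, with multiplicity. -/
def powerSum [Semiring R] (s : Multiset R) (k : ℕ) : R :=
  (s.map (· ^ k)).sum

lemma powerSum_zero_right [Semiring R] (s : Multiset R) : powerSum s 0 = s.card := by
  simp [powerSum]

section CommSemiring

variable [CommSemiring R]

lemma powerSum_map_add_product (s t : Multiset R) (k : ℕ) :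
    powerSum ((s ×ˢ t).map fun z ↦ z.1 + z.2) k =
      ∑ i ∈ Finset.range (k + 1), powerSum s i * powerSum t (k - i) * k.choose i := by
  simp only [powerSum, Multiset.map_map, Function.comp_def, add_pow,
    Multiset.sum_map_sum, Multiset.sum_map_mul_right]
  exact Finset.sum_congr rfl fun i _ ↦ by rw [sum_map_mul_product s t (· ^ i) (· ^ (k - i))]

lemma two_mul_powerSum_kSums_two (s : Multiset R) (k : ℕ) :
    2 * powerSum (kSums 2 s) k + 2 ^ k * powerSum s k =
      ∑ i ∈ Finset.range (k + 1), powerSum s i * powerSum s (k - i) * k.choose i := by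
  rw [← powerSum_map_add_product, map_add_product_self]
  simp [powerSum, mul_pow, Multiset.sum_map_mul_left, Multiset.map_nsmul, Multiset.sum_nsmul]

end CommSemiring

section Domain

variable [CommRing R] [IsDomain R] [CharZero R]

lemma linearIndependent_nat_pow : LinearIndependent ℕ fun x : R ↦ fun k : ℕ ↦ x ^ k :=
  have linearIndependent_pow : LinearIndependent R fun x : R ↦ fun k : ℕ ↦ x ^ k :=
    (linearIndependent_monoidHom (Multiplicative ℕ) R).comp _ (powersHom R).injective
  linearIndependent_pow.restrict_scalars (by simpa using Nat.cast_injective)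

theorem powerSum_injective : Function.Injective (powerSum : Multiset R → ℕ → R) := by
  classical
  have powerSum_eq (s : Multiset R) :
      powerSum s = Finsupp.linearCombination ℕ (fun x : R ↦ fun k : ℕ ↦ x ^ k) s.toFinsupp := by
    ext k
    simp [powerSum, Finset.sum_multiset_map_count, Finsupp.linearCombination_apply, Finsupp.sum]
  intro s t h
  rw [powerSum_eq, powerSum_eq] at h
  exact Multiset.toFinsupp.injective (linearIndependent_nat_pow h)

theorem powerSum_eq_of_kSums_two_eq {s t : Multiset R} (hcard : s.card = t.card)
    (hpow : ∀ j, s.card ≠ 2 ^ j) (h : kSums 2 s = kSums 2 t) : powerSum s = powerSum t := by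
  ext k
  induction k using Nat.strong_induction_on with
  | _ k ih =>
  obtain _ | k := k
  · simp [powerSum_zero_right, hcard]
  have middle_eq :
      ∑ i ∈ Finset.range k,
          powerSum s (i + 1) * powerSum s (k + 1 - (i + 1)) * (k + 1).choose (i + 1) =
        ∑ i ∈ Finset.range k,
          powerSum t (i + 1) * powerSum t (k + 1 - (i + 1)) * (k + 1).choose (i + 1) :=
    Finset.sum_congr rfl fun i hi ↦ by
      have := Finset.mem_range.mp hi
      rw [ih (i + 1) (by lia), ih (k + 1 - (i + 1)) (by lia)]
  have hs := two_mul_powerSum_kSums_two s (k + 1)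
  have ht := two_mul_powerSum_kSums_two t (k + 1)
  rw [Finset.sum_range_succ, Finset.sum_range_succ'] at hs ht
  simp only [h, middle_eq, hcard, powerSum_zero_right, Nat.sub_self, Nat.sub_zero,
    Nat.choose_self, Nat.choose_zero_right, Nat.cast_one] at hs ht
  have coeff_ne_zero : (2 * (2 ^ k - t.card) : R) ≠ 0 :=
    mul_ne_zero two_ne_zero <| sub_ne_zero.mpr <| by exact_mod_cast (hcard ▸ hpow k).symm
  exact mul_left_cancel₀ coeff_ne_zero (by linear_combination hs - ht)

theorem kSums_two_injOn {m : ℕ} (hm : ∀ j, m ≠ 2 ^ j) :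
    Set.InjOn (kSums 2) {s : Multiset R | s.card = m} := by
  rintro s rfl t ht h
  exact powerSum_injective (powerSum_eq_of_kSums_two_eq ht.symm hm h)

end Domain

end PowerSum

section Log

lemma map_log_preK (k : ℕ) {P : Multiset ℕ} (hP : ∀ x ∈ P, 0 < x) :
    (preK k P).map (fun x : ℕ ↦ Real.log x) = kSums k (P.map fun x : ℕ ↦ Real.log x) := by
  simp only [preK, kSums, Multiset.powersetCard_map, Multiset.map_map, Function.comp_def]
  refine Multiset.map_congr rfl fun Q hQ ↦ ?_
  have cast_ne_zero : ∀ x ∈ Q.map ((↑) : ℕ → ℝ), x ≠ 0 := by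
    simp only [Multiset.mem_map, forall_exists_index, and_imp, forall_apply_eq_imp_iff₂]
    exact fun x hx ↦ Nat.cast_ne_zero.mpr
      (hP x (Multiset.mem_of_le (Multiset.mem_powersetCard.mp hQ).1 hx)).ne'
  rw [Nat.cast_multiset_prod, Real.log_multiset_prod cast_ne_zero, Multiset.map_map]
  rfl

lemma map_log_injOn :
    Set.InjOn (Multiset.map fun x : ℕ ↦ Real.log x) {P | ∀ x ∈ P, 0 < x} := by
  have map_exp_map_log {P : Multiset ℕ} (hP : ∀ x ∈ P, 0 < x) :
      (P.map fun x : ℕ ↦ Real.log x).map Real.exp = P.map (↑) := by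
    rw [Multiset.map_map]
    exact Multiset.map_congr rfl fun x hx ↦ Real.exp_log (Nat.cast_pos.mpr (hP x hx))
  intro P hP Q hQ h
  apply Multiset.map_injective (Nat.cast_injective (R := ℝ))
  rw [← map_exp_map_log hP, ← map_exp_map_log hQ]
  exact congrArg _ h

end Log

theorem stmt_15_general {m : ℕ} (hm : ∀ j, m ≠ 2 ^ j) :
    Set.InjOn (preK 2) {P | (∀ x ∈ P, 0 < x) ∧ P.card = m} := by
  rintro P ⟨hP, hPm⟩ Q ⟨hQ, hQm⟩ h
  refine map_log_injOn hP hQ (kSums_two_injOn hm (by simpa using hPm) (by simpa using hQm) ?_)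
  rw [← map_log_preK 2 hP, ← map_log_preK 2 hQ, h]

lemma six_ne_two_pow (j : ℕ) : 6 ≠ 2 ^ j := by
  intro h
  have : 3 ∣ 2 := Nat.prime_three.dvd_of_dvd_pow (h ▸ by decide : 3 ∣ 2 ^ j)
  lia

theorem stmt_15 (n : ℕ) (hn : 1 ≤ n) :
    ∀ lam mu : Multiset ℕ,
      (∀ x ∈ lam, 0 < x) → lam.sum = n → lam.card = 6 →
      (∀ x ∈ mu, 0 < x) → mu.sum = n → mu.card = 6 →
      preK 2 lam = preK 2 mu → lam = mu :=
  fun _ _ hlam _ hlam6 hmu _ hmu6 h ↦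
    stmt_15_general six_ne_two_pow ⟨hlam, hlam6⟩ ⟨hmu, hmu6⟩ h
end

section
/- Let n ≥ 1 be an integer such that n+1 is a perfect square. Then the number of partitions ν of n that lie in the image of pre_2 (i.e., for which there exists a partition λ of some positive integer with pre_2(λ) = ν) is at least (τ(n+1) + 1)/2, where τ(m) denotes the number of positive divisors of m. -/
/-!
The products of pairs of parts of `{1, a, b}` are `a`, `b` and `ab`, with sum `(a + 1)(b + 1) - 1`.
So every factorization `n + 1 = (a + 1)(b + 1)` yields a partition of `n` in the image of `pre_2`,
once zeros are deleted. Deleting zeros is harmless: it commutes with `pre_k`, and the original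
multiset of three products is recovered from its cardinality. The product of these three numbers is
`(ab)²`, so the partition determines `ab`, hence the unordered pair `{a, b}`. Each partition
therefore comes from at most two divisors of `n + 1`.
-/

theorem filter_ne_add_replicate_count {α : Type*} [DecidableEq α] (s : Multiset α) (a : α) :
    s.filter (· ≠ a) + Multiset.replicate (s.count a) a = s := by
  rw [← Multiset.filter_eq', add_comm]
  exact Multiset.filter_add_not (· = a) s

theorem eq_of_card_eq_of_filter_ne_eq {α : Type*} [DecidableEq α] {s t : Multiset α} (a : α)
    (hcard : s.card = t.card) (h : s.filter (· ≠ a) = t.filter (· ≠ a)) : s = t := by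
  have hcount : s.count a = t.count a := by
    have hs := congrArg Multiset.card (filter_ne_add_replicate_count s a)
    have ht := congrArg Multiset.card (filter_ne_add_replicate_count t a)
    simp only [Multiset.card_add, Multiset.card_replicate, h] at hs ht
    lia
  rw [← filter_ne_add_replicate_count s a, ← filter_ne_add_replicate_count t a, h, hcount]

theorem card_le_two_mul_card_image_of_eq_or_eq {α β : Type*} [DecidableEq β]
    {s : Finset α} {f : α → β} (σ : α → α)
    (hf : ∀ x ∈ s, ∀ y ∈ s, f y = f x → y = x ∨ y = σ x) :
    s.card ≤ 2 * (s.image f).card := by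
  classical
  refine Finset.card_le_mul_card_image s 2 (Finset.forall_mem_image.2 fun x hx => ?_)
  have hfiber : s.filter (f · = f x) ⊆ {x, σ x} := fun y hy => by
    obtain ⟨hys, hyx⟩ := Finset.mem_filter.1 hy
    simpa using hf x hx y hys hyx
  exact (Finset.card_le_card hfiber).trans Finset.card_le_two

theorem preK_zero (P : Multiset ℕ) : preK 0 P = {1} := by
  simp [preK]

theorem preK_succ_zero (k : ℕ) : preK (k + 1) 0 = 0 := by
  simp [preK, Multiset.powersetCard_zero_right]

theorem preK_succ_cons (k a : ℕ) (P : Multiset ℕ) :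
    preK (k + 1) (a ::ₘ P) = preK (k + 1) P + (preK k P).map (a * ·) := by
  simp [preK, Multiset.powersetCard_cons]

theorem preK_filter_ne_zero (k : ℕ) (P : Multiset ℕ) :
    preK k (P.filter (· ≠ 0)) = (preK k P).filter (· ≠ 0) := by
  induction P using Multiset.induction generalizing k with
  | empty => cases k <;> simp [preK_zero, preK_succ_zero, Multiset.filter_singleton]
  | cons a P ih =>
    cases k with
    | zero => simp [preK_zero, Multiset.filter_singleton]
    | succ k =>
      obtain rfl | ha := eq_or_ne a 0
      · simp [preK_succ_cons, ih, Multiset.filter_eq_nil, Multiset.mem_replicate]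
      · simp [preK_succ_cons, ih, Multiset.filter_map, ha]

theorem preK_one (P : Multiset ℕ) : preK 1 P = P := by
  simp [preK, Multiset.powersetCard_one]

theorem preK_two_pair (a b : ℕ) : preK 2 {a, b} = {a * b} := by
  rw [Multiset.insert_eq_cons, preK_succ_cons, preK_one, ← Multiset.cons_zero b, preK_succ_cons,
    preK_succ_zero, preK_succ_zero]
  simp

theorem preK_two_one_pair (a b : ℕ) : preK 2 {1, a, b} = {a * b, a, b} := by
  rw [Multiset.insert_eq_cons, preK_succ_cons, preK_one, preK_two_pair]
  simp only [one_mul, Multiset.map_id', Multiset.singleton_add, Multiset.insert_eq_cons]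

/-- The set of partitions of `n` that lie in the image of `pre_k`. Partitions are encoded as
multisets of positive integers. -/
def imagePreK (k n : ℕ) : Set (Multiset ℕ) :=
  {ν | (∀ x ∈ ν, 0 < x) ∧ ν.sum = n ∧
    ∃ lam : Multiset ℕ, (∀ x ∈ lam, 0 < x) ∧ 0 < lam.sum ∧ preK k lam = ν}

theorem imagePreK_finite (k n : ℕ) : (imagePreK k n).Finite :=
  (Set.finite_range (Nat.Partition.parts (n := n))).subset
    fun ν ⟨hpos, hsum, _⟩ => ⟨⟨ν, hpos _, hsum⟩, rfl⟩

theorem filter_ne_zero_preK_mem_imagePreK (k : ℕ) {P : Multiset ℕ} (hP : 0 < P.sum) :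
    (preK k P).filter (· ≠ 0) ∈ imagePreK k (preK k P).sum :=
  let ν := Nat.Partition.ofMultiset (preK k P)
  let lam := Nat.Partition.ofMultiset P
  ⟨fun _ => ν.parts_pos, ν.parts_sum, lam.parts, fun _ => lam.parts_pos,
    hP.trans_eq lam.parts_sum.symm, preK_filter_ne_zero k P⟩

/-- The partition obtained by applying `pre_2` to `{1, a, b}` and deleting zero parts. Allowing
`a = 0` or `b = 0` covers the factorizations of `(a + 1) * (b + 1)` with a factor `1`. -/
def preOnePair (a b : ℕ) : Multiset ℕ := (preK 2 {1, a, b}).filter (· ≠ 0)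

theorem preOnePair_mem_imagePreK {a b n : ℕ} (h : (a + 1) * (b + 1) = n + 1) :
    preOnePair a b ∈ imagePreK 2 n := by
  have hsum : (preK 2 {1, a, b}).sum = n := by
    rw [preK_two_one_pair]
    simp only [Multiset.insert_eq_cons, Multiset.sum_cons, Multiset.sum_singleton]
    lia
  exact hsum ▸ filter_ne_zero_preK_mem_imagePreK 2 (by simp)

theorem eq_or_swap_of_preOnePair_eq {a b c d : ℕ} (h : preOnePair a b = preOnePair c d) :
    a = c ∧ b = d ∨ a = d ∧ b = c := by
  have htriple : ({a * b, a, b} : Multiset ℕ) = {c * d, c, d} := by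
    simp only [preOnePair, preK_two_one_pair] at h
    exact eq_of_card_eq_of_filter_ne_eq 0 (by simp) h
  have hmul : a * b = c * d := by
    have hprod : (a * b) ^ 2 = (c * d) ^ 2 := by
      simpa [sq] using congrArg Multiset.prod htriple
    exact Nat.pow_left_injective two_ne_zero hprod
  have hpair : ({a, b} : Multiset ℕ) = {c, d} := by
    rw [hmul] at htriple
    exact (Multiset.cons_inj_right _).1 htriple
  have ha : a = c ∨ a = d := by
    have hmem : a ∈ ({c, d} : Multiset ℕ) := hpair ▸ Multiset.mem_cons_self a {b}
    simpa using hmem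
  have hsum : a + b = c + d := by
    simpa using congrArg Multiset.sum hpair
  lia

theorem stmt_17_general (n : ℕ) : (n + 1).divisors.card ≤ 2 * (imagePreK 2 n).ncard := by
  let f (d : ℕ) := preOnePair (d - 1) ((n + 1) / d - 1)
  have hpos {d : ℕ} (hd : d ∈ (n + 1).divisors) : 0 < d ∧ 0 < (n + 1) / d :=
    ⟨Nat.pos_of_mem_divisors hd, Nat.div_pos (Nat.divisor_le hd) (Nat.pos_of_mem_divisors hd)⟩
  have hmem : ((n + 1).divisors.image f : Set (Multiset ℕ)) ⊆ imagePreK 2 n := by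
    simp only [Finset.coe_image, Set.image_subset_iff]
    intro d hd
    apply preOnePair_mem_imagePreK
    rw [Nat.sub_add_cancel (hpos hd).1, Nat.sub_add_cancel (hpos hd).2,
      Nat.mul_div_cancel' (Nat.dvd_of_mem_divisors hd)]
  have hfiber : ∀ d ∈ (n + 1).divisors, ∀ e ∈ (n + 1).divisors, f e = f d →
      e = d ∨ e = (n + 1) / d := by
    intro d hd e he hed
    have hd_pos := hpos hd
    have he_pos := hpos he
    have hpair := eq_or_swap_of_preOnePair_eq hed
    lia
  calc (n + 1).divisors.card
      ≤ 2 * ((n + 1).divisors.image f).card := card_le_two_mul_card_image_of_eq_or_eq _ hfiber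
    _ = 2 * ((n + 1).divisors.image f : Set (Multiset ℕ)).ncard := by rw [Set.ncard_coe_finset]
    _ ≤ 2 * (imagePreK 2 n).ncard := by
      gcongr
      exact imagePreK_finite 2 n

theorem stmt_17 (n : ℕ) (hn : 1 ≤ n) (hsq : IsSquare (n + 1)) :
    ((n + 1).divisors.card + 1) / 2 ≤
      {ν : Multiset ℕ | (∀ x ∈ ν, 0 < x) ∧ ν.sum = n ∧
        ∃ lam : Multiset ℕ, (∀ x ∈ lam, 0 < x) ∧ 0 < lam.sum ∧
          preK 2 lam = ν}.ncard := by
  change _ ≤ (imagePreK 2 n).ncard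
  have hcard := stmt_17_general n
  lia
end
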